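/- arXiv:1606.04850 — 2 statements merged into one kernel-verified Lean document; each statement's English description precedes it below -/
import Mathlib

section
/- The series ∑_{n=1}^∞ ζ(2n)/(n(2n+1)(2n+3)·16^n) equals 3ζ(3)/(8π²) + 8β(4)/π³ + (1/3)·log(π/2) - 4/9, where β is the Dirichlet beta function. -/
open Real

noncomputable def dirichletBeta (s : ℕ) : ℝ := ∑' n : ℕ, (-1) ^ n / (2 * (n : ℝ) + 1) ^ s

/-! The partial fractions `2 / ((2n + 1) * (2n + 3)) = ∫₀¹ (1 - t²) * t ^ (2n) dt` turn the series
into an integral of the generating function `∑ ζ(2n) * x ^ (2n) / n = log (π x / sin (π x))`, which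
is Euler's product for the sine. The integral of `(1 - t²) * log (2 * sin (π x t))` is then computed
from the Fourier series `-log (2 * sin (θ / 2)) = ∑ cos (k θ) / k`; as this series converges only
conditionally, it is integrated at radius `r < 1` and Abel's limit theorem is used for `r → 1`.
At `x = 1/4` the sums `∑ cos (k π / 2) / k ^ 3` and `∑ sin (k π / 2) / k ^ 4` that come out are
multiples of `ζ(3)` and `β(4)`. -/

open Filter Topology MeasureTheory

/-! ### Zeta and beta series -/

theorem ofReal_re_riemannZeta (s : ℝ) : ((riemannZeta s).re : ℂ) = riemannZeta s :=
  Complex.conj_eq_iff_re.1 (by rw [← riemannZeta_conj, Complex.conj_ofReal])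

theorem hasSum_one_div_nat_pow {m : ℕ} (hm : 1 < m) :
    HasSum (fun k : ℕ => 1 / (k : ℝ) ^ m) (riemannZeta m).re := by
  have hsum : ((∑' k : ℕ, 1 / (k : ℝ) ^ m : ℝ) : ℂ) = riemannZeta m := by
    rw [zeta_nat_eq_tsum_of_gt_one hm]
    push_cast
    rfl
  rw [← hsum, Complex.ofReal_re]
  exact (Real.summable_one_div_nat_pow.2 hm).hasSum

theorem hasSum_one_div_nat_add_one_pow {m : ℕ} (hm : 1 < m) :
    HasSum (fun k : ℕ => 1 / ((k : ℝ) + 1) ^ m) (riemannZeta m).re := by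
  have hm0 : m ≠ 0 := by lia
  simpa [hm0] using (hasSum_nat_add_iff' 1).2 (hasSum_one_div_nat_pow hm)

theorem hasSum_one_div_even_pow {m : ℕ} (hm : 1 < m) :
    HasSum (fun j : ℕ => 1 / ((2 * j : ℕ) : ℝ) ^ m) ((riemannZeta m).re / 2 ^ m) := by
  refine ((hasSum_one_div_nat_pow hm).div_const (2 ^ m)).congr_fun fun j => ?_
  push_cast
  rw [mul_pow, div_div, mul_comm]

theorem hasSum_one_div_odd_pow {m : ℕ} (hm : 1 < m) :
    HasSum (fun j : ℕ => 1 / ((2 * j + 1 : ℕ) : ℝ) ^ m)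
      ((1 - 1 / 2 ^ m) * (riemannZeta m).re) := by
  have hodd : Summable fun j : ℕ => 1 / ((2 * j + 1 : ℕ) : ℝ) ^ m :=
    (hasSum_one_div_nat_pow hm).summable.comp_injective
      (i := fun j : ℕ => 2 * j + 1) fun i j hij => by simpa using hij
  have hsplit := (HasSum.even_add_odd (f := fun k : ℕ => 1 / (k : ℝ) ^ m)
    (hasSum_one_div_even_pow hm) hodd.hasSum).unique (hasSum_one_div_nat_pow hm)
  convert hodd.hasSum using 1
  linear_combination -hsplit

theorem hasSum_neg_one_pow_div_nat_pow {m : ℕ} (hm : 1 < m) :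
    HasSum (fun j : ℕ => (-1) ^ j / (j : ℝ) ^ m) ((2 / 2 ^ m - 1) * (riemannZeta m).re) := by
  rw [show (2 / 2 ^ m - 1) * (riemannZeta m).re = (riemannZeta m).re / 2 ^ m +
    -((1 - 1 / 2 ^ m) * (riemannZeta m).re) by ring]
  refine HasSum.even_add_odd ?_ ?_
  · exact (hasSum_one_div_even_pow hm).congr_fun fun j => by simp
  · exact (hasSum_one_div_odd_pow hm).neg.congr_fun fun j => by simp [pow_succ, neg_div]

theorem hasSum_dirichletBeta {m : ℕ} (hm : 1 < m) :
    HasSum (fun j : ℕ => (-1) ^ j / (2 * (j : ℝ) + 1) ^ m) (dirichletBeta m) := by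
  refine (Summable.of_norm_bounded (hasSum_one_div_odd_pow hm).summable fun j => ?_).hasSum
  simp [abs_of_nonneg (by positivity : (0 : ℝ) ≤ 2 * j + 1)]

theorem hasSum_cos_nat_mul_pi_div_two_div_pow {m : ℕ} (hm : 1 < m) :
    HasSum (fun k : ℕ => cos (k * (π / 2)) / (k : ℝ) ^ m)
      ((2 / 2 ^ m - 1) * (riemannZeta m).re / 2 ^ m) := by
  rw [← add_zero ((2 / 2 ^ m - 1) * _ / 2 ^ m)]
  apply HasSum.even_add_odd
  · refine ((hasSum_neg_one_pow_div_nat_pow hm).div_const (2 ^ m)).congr_fun fun j => ?_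
    rw [show ((2 * j : ℕ) : ℝ) * (π / 2) = j * π by push_cast; ring, cos_nat_mul_pi]
    push_cast
    rw [mul_pow, div_div, mul_comm]
  · refine hasSum_zero.congr_fun fun j => ?_
    rw [show ((2 * j + 1 : ℕ) : ℝ) * (π / 2) = j * π + π / 2 by push_cast; ring,
      cos_add_pi_div_two, sin_nat_mul_pi, neg_zero, zero_div]

theorem hasSum_sin_nat_mul_pi_div_two_div_pow {m : ℕ} (hm : 1 < m) :
    HasSum (fun k : ℕ => sin (k * (π / 2)) / (k : ℝ) ^ m) (dirichletBeta m) := by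
  rw [← zero_add (dirichletBeta m)]
  apply HasSum.even_add_odd
  · refine hasSum_zero.congr_fun fun j => ?_
    rw [show ((2 * j : ℕ) : ℝ) * (π / 2) = j * π by push_cast; ring, sin_nat_mul_pi, zero_div]
  · refine (hasSum_dirichletBeta hm).congr_fun fun j => ?_
    rw [show ((2 * j + 1 : ℕ) : ℝ) * (π / 2) = j * π + π / 2 by push_cast; ring,
      sin_add_pi_div_two, cos_nat_mul_pi]
    push_cast
    rfl

/-! ### The generating function of the even zeta values -/

theorem hasSum_of_hasSum_rows_of_nonneg {α β : Type*} {f : α → β → ℝ} {r : α → ℝ} {c : β → ℝ}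
    {s : ℝ} (hf : ∀ a b, 0 ≤ f a b) (hrow : ∀ a, HasSum (f a) (r a)) (hr : HasSum r s)
    (hcol : ∀ b, HasSum (fun a => f a b) (c b)) : HasSum c s := by
  have hsummable : Summable (Function.uncurry f) := by
    refine (summable_prod_of_nonneg fun p => hf p.1 p.2).2 ⟨fun a => (hrow a).summable, ?_⟩
    exact hr.summable.congr fun a => (hrow a).tsum_eq.symm
  have hs : HasSum (Function.uncurry f) s :=
    (hsummable.hasSum.prod_fiberwise hrow).unique hr ▸ hsummable.hasSum
  exact ((Equiv.prodComm β α).hasSum_iff.2 hs).prod_fiberwise hcol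

theorem sq_div_nat_add_one_sq_lt_one {x : ℝ} (hx : |x| < 1) (k : ℕ) :
    x ^ 2 / ((k : ℝ) + 1) ^ 2 < 1 := by
  have hk : (1 : ℝ) ≤ (k + 1) ^ 2 := one_le_pow₀ (by simp)
  rw [div_lt_one (by positivity)]
  exact ((sq_lt_one_iff_abs_lt_one x).2 hx).trans_le hk

theorem hasSum_neg_log_one_sub_sq_div {x : ℝ} (h0 : 0 < x) (h1 : x < 1) :
    HasSum (fun k : ℕ => -log (1 - x ^ 2 / ((k : ℝ) + 1) ^ 2))
      (log (π * x) - log (sin (π * x))) := by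
  have hlt := sq_div_nat_add_one_sq_lt_one (abs_lt.2 ⟨by linarith, h1⟩)
  have hfactor : ∀ k : ℕ, 0 < 1 - x ^ 2 / ((k : ℝ) + 1) ^ 2 := fun k => sub_pos.2 (hlt k)
  have hsin : 0 < sin (π * x) := sin_pos_of_pos_of_lt_pi (by positivity) (by nlinarith [pi_pos])
  rw [hasSum_iff_tendsto_nat_of_nonneg]
  · refine (((tendsto_euler_sin_prod x).log hsin.ne').const_sub (log (π * x))).congr fun n => ?_
    rw [log_mul (by positivity) (Finset.prod_ne_zero_iff.2 fun k _ => (hfactor k).ne'),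
      log_prod fun k _ => (hfactor k).ne', Finset.sum_neg_distrib]
    ring
  · exact fun k => neg_nonneg.2
      (log_nonpos (hfactor k).le (sub_le_self _ (by positivity)))

theorem hasSum_riemannZeta_even_mul_pow_div {x : ℝ} (h0 : 0 < x) (h1 : x < 1) :
    HasSum (fun n : ℕ => (riemannZeta ↑(2 * (n + 1))).re * x ^ (2 * (n + 1)) / (n + 1))
      (log (π * x) - log (sin (π * x))) := by
  refine hasSum_of_hasSum_rows_of_nonneg
    (f := fun k n : ℕ => (x ^ 2 / ((k : ℝ) + 1) ^ 2) ^ (n + 1) / ((n : ℝ) + 1))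
    (fun k n => by positivity) (fun k => hasSum_pow_div_log_of_abs_lt_one ?_)
    (hasSum_neg_log_one_sub_sq_div h0 h1) fun n => ?_
  · rw [abs_of_nonneg (by positivity)]
    exact sq_div_nat_add_one_sq_lt_one (abs_lt.2 ⟨by linarith, h1⟩) k
  · have hzeta := (hasSum_one_div_nat_add_one_pow (m := 2 * (n + 1)) (by lia)).mul_right
      (x ^ (2 * (n + 1)) / ((n : ℝ) + 1))
    rw [← mul_div_assoc] at hzeta
    refine hzeta.congr_fun fun k => ?_
    rw [div_pow, ← pow_mul, ← pow_mul]
    ring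

/-! ### Moments of `1 - t ^ 2` -/

theorem integral_one_sub_sq_mul_pow (m : ℕ) :
    ∫ t in (0 : ℝ)..1, (1 - t ^ 2) * t ^ m = 2 / (((m : ℝ) + 1) * (m + 3)) := by
  have hexpand : ∀ t : ℝ, (1 - t ^ 2) * t ^ m = t ^ m - t ^ (m + 2) := fun t => by ring
  simp_rw [hexpand]
  rw [intervalIntegral.integral_sub (by simp) (by simp), integral_pow, integral_pow]
  push_cast
  simp only [one_pow, zero_pow (Nat.succ_ne_zero _), sub_zero]
  field_simp
  ring

theorem integral_one_sub_sq_mul_log : ∫ t in (0 : ℝ)..1, (1 - t ^ 2) * log t = -8 / 9 := by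
  rw [intervalIntegral.integral_eq_sub_of_hasDerivAt_of_le
    (f := fun t : ℝ => t * log t - t - t ^ 2 * (t * log t) / 3 + t ^ 3 / 9) zero_le_one ?_ ?_
    (intervalIntegral.intervalIntegrable_log'.continuousOn_mul (by fun_prop))]
  · norm_num
  · have := continuous_mul_log
    exact Continuous.continuousOn (by fun_prop)
  · intro t ht
    have hlog := hasDerivAt_mul_log ht.1.ne'
    refine (((hlog.sub (hasDerivAt_id t)).sub (((hasDerivAt_pow 2 t).mul hlog).div_const 3)).add
      ((hasDerivAt_pow 3 t).div_const 9)).congr_deriv ?_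
    simp only [add_sub_cancel_right, Nat.cast_ofNat, Nat.add_one_sub_one, pow_one]
    ring

theorem integral_one_sub_sq_mul_cos {a : ℝ} (ha : a ≠ 0) :
    ∫ t in (0 : ℝ)..1, (1 - t ^ 2) * cos (a * t) = 2 * sin a / a ^ 3 - 2 * cos a / a ^ 2 := by
  rw [intervalIntegral.integral_eq_sub_of_hasDerivAt (f := fun t : ℝ =>
    (1 - t ^ 2) * sin (a * t) / a - 2 * t * cos (a * t) / a ^ 2 + 2 * sin (a * t) / a ^ 3)]
  · simp only [one_pow, sub_self, mul_one, zero_mul, zero_div, zero_sub, ne_eq,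
      OfNat.ofNat_ne_zero, not_false_eq_true, zero_pow, sub_zero, mul_zero, sin_zero, cos_zero,
      add_zero]
    ring
  · intro t _
    have hlin : HasDerivAt (fun t : ℝ => a * t) a t := by
      simpa using (hasDerivAt_id t).const_mul a
    refine ((((((hasDerivAt_pow 2 t).const_sub 1).mul hlin.sin).div_const a).sub
      ((((hasDerivAt_id t).const_mul 2).mul hlin.cos).div_const (a ^ 2))).add
      ((hlin.sin.const_mul 2).div_const (a ^ 3))).congr_deriv ?_
    simp only [Nat.cast_ofNat, Nat.add_one_sub_one, pow_one, neg_mul, mul_one, id_eq, mul_neg]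
    field_simp
    ring
  · exact Continuous.intervalIntegrable (by fun_prop) _ _

/-! ### Integration against the Fourier series of `log (2 * sin (θ / 2))` -/

theorem hasSum_pow_mul_cos_div {r : ℝ} (hr : |r| < 1) (θ : ℝ) :
    HasSum (fun k : ℕ => r ^ k * cos (k * θ) / k)
      (-log ‖1 - r * Complex.exp (θ * Complex.I)‖) := by
  have hnorm : ‖(r : ℂ) * Complex.exp (θ * Complex.I)‖ < 1 := by
    rwa [norm_mul, Complex.norm_exp_ofReal_mul_I, mul_one, Complex.norm_real]
  have hre := Complex.hasSum_re (Complex.hasSum_taylorSeries_neg_log hnorm)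
  rw [Complex.neg_re, Complex.log_re] at hre
  refine hre.congr_fun fun k => ?_
  rw [mul_pow, ← Complex.exp_nat_mul, ← Complex.ofReal_pow, Complex.div_natCast_re,
    Complex.re_ofReal_mul, ← mul_assoc, ← Complex.ofReal_natCast, ← Complex.ofReal_mul,
    Complex.exp_ofReal_mul_I_re]

theorem hasSum_pow_mul_integral_mul_cos_div {f : ℝ → ℝ} {a b r : ℝ}
    (hf : IntervalIntegrable f volume a b) (hr : |r| < 1) (ω : ℝ) :
    HasSum (fun k : ℕ => (∫ t in a..b, f t * cos (k * (ω * t))) / k * r ^ k)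
      (∫ t in a..b, f t * -log ‖1 - r * Complex.exp ((ω * t : ℝ) * Complex.I)‖) := by
  have hsum : HasSum (fun k : ℕ => ∫ t in a..b, f t * (r ^ k * cos (k * (ω * t)) / k))
      (∫ t in a..b, f t * -log ‖1 - r * Complex.exp ((ω * t : ℝ) * Complex.I)‖) := by
    refine intervalIntegral.hasSum_integral_of_dominated_convergence (fun k t => ‖f t‖ * |r| ^ k)
      (fun k => ?_) (fun k => .of_forall fun t _ => ?_)
      (.of_forall fun t _ => (summable_geometric_of_lt_one (abs_nonneg r) hr).mul_left _) ?_
      (.of_forall fun t _ => (hasSum_pow_mul_cos_div hr _).mul_left _)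
    · exact hf.aestronglyMeasurable_restrict_uIoc.mul
        (Continuous.aestronglyMeasurable (by fun_prop))
    · have hcos : |cos (k * (ω * t)) / k| ≤ 1 := by
        rw [abs_div, Nat.abs_cast]
        rcases k.eq_zero_or_pos with rfl | hk
        · simp
        · exact div_le_one_of_le₀ ((abs_cos_le_one _).trans (mod_cast hk)) k.cast_nonneg
      rw [norm_mul, mul_div_assoc, norm_mul, norm_pow, Real.norm_eq_abs r]
      exact mul_le_mul_of_nonneg_left (mul_le_of_le_one_right (by positivity) hcos)
        (norm_nonneg _)
    · simp_rw [tsum_mul_left]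
      exact hf.norm.mul_const _
  refine hsum.congr_fun fun k => ?_
  rw [div_mul_eq_mul_div, mul_div_assoc, ← intervalIntegral.integral_mul_const]
  exact intervalIntegral.integral_congr fun t _ => by ring

theorem norm_one_sub_le_two_mul_norm_one_sub_mul {w : ℂ} (hw : ‖w‖ = 1) {r : ℝ} (h0 : 0 ≤ r)
    (h1 : r ≤ 1) : ‖1 - w‖ ≤ 2 * ‖1 - r * w‖ := by
  have hradial : ‖r * w - w‖ = 1 - r := by
    rw [← sub_one_mul, norm_mul, hw, mul_one, norm_sub_rev, ← Complex.ofReal_one,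
      ← Complex.ofReal_sub, Complex.norm_of_nonneg (sub_nonneg.2 h1)]
  have hreverse : 1 - r ≤ ‖1 - r * w‖ := by
    simpa [hw, abs_of_nonneg h0] using norm_sub_norm_le 1 (r * w)
  calc ‖1 - w‖ ≤ ‖1 - r * w‖ + ‖r * w - w‖ := norm_sub_le_norm_sub_add_norm_sub _ _ _
    _ ≤ 2 * ‖1 - r * w‖ := by linarith

theorem abs_log_norm_one_sub_mul_le {w : ℂ} (hw : ‖w‖ = 1) (hw1 : w ≠ 1) {r : ℝ} (h0 : 0 ≤ r)
    (h1 : r ≤ 1) : |log ‖1 - r * w‖| ≤ log 2 + |log ‖1 - w‖| := by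
  have hpos : 0 < ‖1 - w‖ := norm_pos_iff.2 (sub_ne_zero.2 hw1.symm)
  have hle := norm_one_sub_le_two_mul_norm_one_sub_mul hw h0 h1
  have hpos' : 0 < ‖1 - r * w‖ := by linarith
  have hle_two : ‖1 - r * w‖ ≤ 2 := by
    calc ‖1 - r * w‖ ≤ ‖(1 : ℂ)‖ + ‖r * w‖ := norm_sub_le _ _
      _ ≤ 2 := by
        rw [norm_one, norm_mul, hw, Complex.norm_of_nonneg h0]
        linarith
  have hupper := log_le_log hpos' hle_two
  have hlower := log_le_log hpos hle
  rw [log_mul two_ne_zero hpos'.ne'] at hlower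
  rw [abs_le]
  constructor <;> linarith [neg_abs_le (log ‖1 - w‖), abs_nonneg (log ‖1 - w‖)]

theorem ae_exp_ofReal_mul_I_ne_one {ω : ℝ} (hω : ω ≠ 0) :
    ∀ᵐ t : ℝ, Complex.exp ((ω * t : ℝ) * Complex.I) ≠ 1 := by
  filter_upwards [(Set.countable_range fun n : ℤ => n * (2 * π) / ω).ae_notMem volume]
    with t ht h_one
  obtain ⟨n, hn⟩ := Complex.exp_eq_one_iff.1 h_one
  refine ht ⟨n, (div_eq_iff hω).2 ?_⟩
  rw [← mul_assoc] at hn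
  have hn' := mul_right_cancel₀ Complex.I_ne_zero hn
  rw [mul_comm t]
  exact_mod_cast hn'.symm

theorem intervalIntegrable_log_norm_one_sub_exp (a b ω : ℝ) :
    IntervalIntegrable (fun t : ℝ => log ‖1 - Complex.exp ((ω * t : ℝ) * Complex.I)‖)
      volume a b := by
  refine MeromorphicOn.intervalIntegrable_log_norm fun t _ => AnalyticAt.meromorphicAt ?_
  have hlin : AnalyticAt ℝ (fun t : ℝ => ((ω * t : ℝ) : ℂ) * Complex.I) t :=
    ((Complex.ofRealCLM.analyticAt _).comp (analyticAt_const.mul analyticAt_id)).mul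
      analyticAt_const
  exact analyticAt_const.sub (analyticAt_cexp.restrictScalars.comp hlin)

theorem tendsto_integral_mul_log_norm_one_sub_mul_exp {f : ℝ → ℝ} {a b ω : ℝ} (hω : ω ≠ 0)
    (hf : ContinuousOn f (Set.uIcc a b)) :
    Tendsto (fun r : ℝ => ∫ t in a..b,
        f t * -log ‖1 - r * Complex.exp ((ω * t : ℝ) * Complex.I)‖) (𝓝[<] 1)
      (𝓝 (∫ t in a..b, f t * -log ‖1 - Complex.exp ((ω * t : ℝ) * Complex.I)‖)) := by
  refine intervalIntegral.tendsto_integral_filter_of_dominated_convergence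
    (fun t => ‖f t‖ * (log 2 + |log ‖1 - Complex.exp ((ω * t : ℝ) * Complex.I)‖|))
    (.of_forall fun r => ?_) ?_ ?_ ?_
  · exact hf.intervalIntegrable.aestronglyMeasurable_restrict_uIoc.mul
      (Measurable.aestronglyMeasurable (by fun_prop))
  · filter_upwards [Ioo_mem_nhdsLT zero_lt_one] with r hr
    filter_upwards [ae_exp_ofReal_mul_I_ne_one hω] with t ht _
    rw [norm_mul, norm_neg, Real.norm_eq_abs (log _)]
    exact mul_le_mul_of_nonneg_left (abs_log_norm_one_sub_mul_le
      (Complex.norm_exp_ofReal_mul_I _) ht hr.1.le hr.2.le) (norm_nonneg _)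
  · exact (intervalIntegrable_const.add
      (intervalIntegrable_log_norm_one_sub_exp a b ω).abs).continuousOn_mul hf.norm
  · filter_upwards [ae_exp_ofReal_mul_I_ne_one hω] with t ht _
    have hcont : ContinuousAt
        (fun r : ℝ => ‖1 - r * Complex.exp ((ω * t : ℝ) * Complex.I)‖) 1 := by fun_prop
    have hlog := hcont.log (by simpa [sub_eq_zero] using Ne.symm ht)
    simpa using (hlog.neg.const_mul (f t)).tendsto.mono_left nhdsWithin_le_nhds

theorem integral_mul_neg_log_norm_one_sub_exp {f : ℝ → ℝ} {a b ω L : ℝ} (hω : ω ≠ 0)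
    (hf : ContinuousOn f (Set.uIcc a b))
    (hL : Tendsto (fun n => ∑ k ∈ Finset.range n, (∫ t in a..b, f t * cos (k * (ω * t))) / k)
      atTop (𝓝 L)) :
    ∫ t in a..b, f t * -log ‖1 - Complex.exp ((ω * t : ℝ) * Complex.I)‖ = L := by
  refine tendsto_nhds_unique (tendsto_integral_mul_log_norm_one_sub_mul_exp hω hf)
    ((tendsto_tsum_powerSeries_nhdsWithin_lt hL).congr' ?_)
  filter_upwards [Ioo_mem_nhdsLT zero_lt_one] with r hr
  exact (hasSum_pow_mul_integral_mul_cos_div hf.intervalIntegrable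
    (abs_lt.2 ⟨by linarith [hr.1], hr.2⟩) ω).tsum_eq

theorem summable_cos_div_nat_pow (ω : ℝ) {m : ℕ} (hm : 1 < m) :
    Summable fun k : ℕ => cos (k * ω) / (k : ℝ) ^ m := by
  refine .of_norm_bounded (Real.summable_one_div_nat_pow.2 hm) fun k => ?_
  rw [norm_div, norm_pow, Real.norm_natCast]
  gcongr
  exact abs_cos_le_one _

theorem summable_sin_div_nat_pow (ω : ℝ) {m : ℕ} (hm : 1 < m) :
    Summable fun k : ℕ => sin (k * ω) / (k : ℝ) ^ m := by
  refine .of_norm_bounded (Real.summable_one_div_nat_pow.2 hm) fun k => ?_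
  rw [norm_div, norm_pow, Real.norm_natCast]
  gcongr
  exact abs_sin_le_one _

theorem integral_one_sub_sq_mul_neg_log_norm_one_sub_exp {ω : ℝ} (hω : ω ≠ 0) :
    ∫ t in (0 : ℝ)..1, (1 - t ^ 2) * -log ‖1 - Complex.exp ((ω * t : ℝ) * Complex.I)‖ =
      2 / ω ^ 3 * ∑' k : ℕ, sin (k * ω) / (k : ℝ) ^ 4 -
        2 / ω ^ 2 * ∑' k : ℕ, cos (k * ω) / (k : ℝ) ^ 3 := by
  refine integral_mul_neg_log_norm_one_sub_exp hω (by fun_prop) (HasSum.tendsto_sum_nat ?_)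
  have hsin := (summable_sin_div_nat_pow ω (m := 4) (by norm_num)).hasSum.mul_left (2 / ω ^ 3)
  have hcos := (summable_cos_div_nat_pow ω (m := 3) (by norm_num)).hasSum.mul_left (2 / ω ^ 2)
  refine (hsin.sub hcos).congr_fun fun k => ?_
  rcases eq_or_ne k 0 with rfl | hk
  · simp
  · have hk' : (k : ℝ) ≠ 0 := Nat.cast_ne_zero.2 hk
    simp_rw [← mul_assoc]
    rw [integral_one_sub_sq_mul_cos (mul_ne_zero hk' hω)]
    field_simp

/-! ### The series at a general argument -/

theorem log_sub_log_sin_eq {x t : ℝ} (hx0 : 0 < x) (hx1 : x < 1) (ht0 : 0 < t) (ht1 : t ≤ 1) :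
    log (π * (x * t)) - log (sin (π * (x * t))) =
      log t + log (2 * π * x) +
        -log ‖1 - Complex.exp ((2 * π * x * t : ℝ) * Complex.I)‖ := by
  have hxt : x * t < 1 := by nlinarith
  have hsin : 0 < sin (π * (x * t)) :=
    sin_pos_of_pos_of_lt_pi (by positivity) (by nlinarith [pi_pos])
  have hnorm : ‖1 - Complex.exp ((2 * π * x * t : ℝ) * Complex.I)‖ = 2 * sin (π * (x * t)) := by
    rw [norm_sub_rev, mul_comm, Complex.norm_exp_I_mul_ofReal_sub_one,
      show 2 * π * x * t / 2 = π * (x * t) by ring, Real.norm_of_nonneg (by positivity)]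
  rw [hnorm, log_mul two_ne_zero hsin.ne', ← log_mul ht0.ne' (by positivity),
    show t * (2 * π * x) = 2 * (π * (x * t)) by ring, log_mul two_ne_zero (by positivity)]
  ring

theorem integral_one_sub_sq_mul_log_sub_log_sin {x : ℝ} (h0 : 0 < x) (h1 : x < 1) :
    ∫ t in (0 : ℝ)..1, (1 - t ^ 2) * (log (π * (x * t)) - log (sin (π * (x * t)))) =
      2 / 3 * log (2 * π * x) - 8 / 9 +
        (2 / (2 * π * x) ^ 3 * ∑' k : ℕ, sin (k * (2 * π * x)) / (k : ℝ) ^ 4 -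
          2 / (2 * π * x) ^ 2 * ∑' k : ℕ, cos (k * (2 * π * x)) / (k : ℝ) ^ 3) := by
  set ω := 2 * π * x
  have hsplit : ∫ t in (0 : ℝ)..1, (1 - t ^ 2) * (log (π * (x * t)) - log (sin (π * (x * t)))) =
      ∫ t in (0 : ℝ)..1, ((1 - t ^ 2) * log t + (1 - t ^ 2) * log ω) +
        (1 - t ^ 2) * -log ‖1 - Complex.exp ((ω * t : ℝ) * Complex.I)‖ := by
    refine intervalIntegral.integral_congr_ae (.of_forall fun t ht => ?_)
    rw [Set.uIoc_of_le zero_le_one] at ht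
    rw [log_sub_log_sin_eq h0 h1 ht.1 ht.2, mul_add, mul_add]
  have hlog : IntervalIntegrable (fun t : ℝ => (1 - t ^ 2) * log t) volume 0 1 :=
    intervalIntegral.intervalIntegrable_log'.continuousOn_mul (by fun_prop)
  have hconst : IntervalIntegrable (fun t : ℝ => (1 - t ^ 2) * log ω) volume 0 1 :=
    Continuous.intervalIntegrable (by fun_prop) _ _
  have hnorm : IntervalIntegrable
      (fun t : ℝ => (1 - t ^ 2) * -log ‖1 - Complex.exp ((ω * t : ℝ) * Complex.I)‖) volume 0 1 :=
    (intervalIntegrable_log_norm_one_sub_exp 0 1 ω).neg.continuousOn_mul (by fun_prop)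
  have hmass : ∫ t in (0 : ℝ)..1, (1 - t ^ 2) = 2 / 3 := by
    simpa using integral_one_sub_sq_mul_pow 0
  rw [hsplit, intervalIntegral.integral_add (hlog.add hconst) hnorm,
    intervalIntegral.integral_add hlog hconst, intervalIntegral.integral_mul_const,
    integral_one_sub_sq_mul_log, hmass,
    integral_one_sub_sq_mul_neg_log_norm_one_sub_exp (by positivity)]
  ring

theorem hasSum_integral_one_sub_sq_mul_log_sub_log_sin {x : ℝ} (h0 : 0 < x) (h1 : x < 1) :
    HasSum (fun n : ℕ => ∫ t in (0 : ℝ)..1, (1 - t ^ 2) *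
        ((riemannZeta ↑(2 * (n + 1))).re * (x * t) ^ (2 * (n + 1)) / (n + 1)))
      (∫ t in (0 : ℝ)..1, (1 - t ^ 2) * (log (π * (x * t)) - log (sin (π * (x * t))))) := by
  have hzeta : ∀ n : ℕ, 0 ≤ (riemannZeta ↑(2 * (n + 1))).re := fun n =>
    (hasSum_one_div_nat_pow (by lia)).nonneg fun k => by positivity
  refine intervalIntegral.hasSum_integral_of_dominated_convergence
    (fun n _ => (riemannZeta ↑(2 * (n + 1))).re * x ^ (2 * (n + 1)) / (n + 1))
    (fun n => Continuous.aestronglyMeasurable (by fun_prop))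
    (fun n => .of_forall fun t ht => ?_)
    (.of_forall fun t _ => (hasSum_riemannZeta_even_mul_pow_div h0 h1).summable)
    intervalIntegrable_const (.of_forall fun t ht => ?_)
  · obtain ⟨ht0, ht1⟩ := Set.uIoc_of_le (zero_le_one' ℝ) ▸ ht
    have hweight : 0 ≤ 1 - t ^ 2 := by nlinarith
    have hn := hzeta n
    rw [Real.norm_of_nonneg (by positivity)]
    refine (mul_le_of_le_one_left (by positivity) (sub_le_self _ (sq_nonneg t))).trans ?_
    gcongr
    exact mul_le_of_le_one_right h0.le ht1
  · obtain ⟨ht0, ht1⟩ := Set.uIoc_of_le (zero_le_one' ℝ) ▸ ht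
    exact (hasSum_riemannZeta_even_mul_pow_div (by positivity) (by nlinarith)).mul_left _

theorem hasSum_riemannZeta_even_mul_pow_div_mul {x : ℝ} (h0 : 0 < x) (h1 : x < 1) :
    HasSum (fun n : ℕ => (riemannZeta ↑(2 * (n + 1))).re * x ^ (2 * (n + 1)) /
        ((n + 1) * (2 * n + 3) * (2 * n + 5)))
      (1 / 3 * log (2 * π * x) - 4 / 9 +
        ((∑' k : ℕ, sin (k * (2 * π * x)) / (k : ℝ) ^ 4) / (2 * π * x) ^ 3 -
          (∑' k : ℕ, cos (k * (2 * π * x)) / (k : ℝ) ^ 3) / (2 * π * x) ^ 2)) := by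
  have hvalue : 1 / 3 * log (2 * π * x) - 4 / 9 +
        ((∑' k : ℕ, sin (k * (2 * π * x)) / (k : ℝ) ^ 4) / (2 * π * x) ^ 3 -
          (∑' k : ℕ, cos (k * (2 * π * x)) / (k : ℝ) ^ 3) / (2 * π * x) ^ 2) =
      1 / 2 * ∫ t in (0 : ℝ)..1, (1 - t ^ 2) * (log (π * (x * t)) - log (sin (π * (x * t)))) := by
    rw [integral_one_sub_sq_mul_log_sub_log_sin h0 h1]
    ring
  rw [hvalue]
  refine ((hasSum_integral_one_sub_sq_mul_log_sub_log_sin h0 h1).mul_left (1 / 2)).congr_fun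
    fun n => ?_
  have hpull : ∀ t : ℝ,
      (1 - t ^ 2) * ((riemannZeta ↑(2 * (n + 1))).re * (x * t) ^ (2 * (n + 1)) / (n + 1)) =
        (riemannZeta ↑(2 * (n + 1))).re * x ^ (2 * (n + 1)) / (n + 1) *
          ((1 - t ^ 2) * t ^ (2 * (n + 1))) := fun t => by ring
  simp_rw [hpull]
  rw [intervalIntegral.integral_const_mul, integral_one_sub_sq_mul_pow]
  push_cast
  field_simp
  ring

theorem stmt12 :
    ∑' n : ℕ, riemannZeta (2 * (n + 1)) /
        ((n + 1) * (2 * n + 3) * (2 * n + 5) * 16 ^ (n + 1)) =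
      3 * riemannZeta 3 / (8 * (π : ℂ) ^ 2) + 8 * (dirichletBeta 4 : ℂ) / (π : ℂ) ^ 3 +
        (1 / 3) * (Real.log (π / 2) : ℂ) - 4 / 9 := by
  have hsum := hasSum_riemannZeta_even_mul_pow_div_mul (x := 1 / 4) (by norm_num) (by norm_num)
  rw [show 2 * π * (1 / 4) = π / 2 by ring,
    (hasSum_sin_nat_mul_pi_div_two_div_pow (by norm_num)).tsum_eq,
    (hasSum_cos_nat_mul_pi_div_two_div_pow (by norm_num)).tsum_eq] at hsum
  have hzeta_even : ∀ n : ℕ, ((riemannZeta (2 * (n + 1))).re : ℂ) = riemannZeta (2 * (n + 1)) :=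
    fun n => mod_cast ofReal_re_riemannZeta (2 * (n + 1))
  have hzeta_three : ((riemannZeta 3).re : ℂ) = riemannZeta 3 := mod_cast ofReal_re_riemannZeta 3
  refine Eq.trans (tsum_congr fun n => ?_) ((Complex.hasSum_ofReal.2 hsum).tsum_eq.trans ?_)
  · have hpow : (1 / 4 : ℂ) ^ (2 * (n + 1)) = 1 / 16 ^ (n + 1) := by
      rw [pow_mul, one_div_pow, one_div_pow]
      norm_num
    push_cast [hzeta_even, hpow]
    field_simp
  · push_cast [hzeta_three]
    field_simp
    ring
end

section
/- The series ∑_{n=0}^∞ ζ(2n)/((2n+1)(2n+2)(2n+3)·4^n) equals -5ζ(3)/(8π²). -/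
open Real

/-!
Expanding each term of Euler's series for `π cot (πz)` as a geometric series gives
`∑ ζ(2n) z ^ (2n) = -(πz / 2) cot (πz)`. Integrated against the weight `(1 - 2x) ^ 2` on
`[0, 1/2]`, the left side becomes the series of the theorem and the right side
`-(π / 2) ∫ x (1 - 2x) ^ 2 cot (πx)`. The conjugate Dirichlet kernel and the Riemann–Lebesgue lemma
justify the formal expansion `cot (πx) = 2 ∑ sin (2πkx)` under this integral, and the `k`-th sine
coefficient is `(8 + 4 (-1) ^ k) / (2πk) ^ 3`, so the integral is a rational multiple of
`ζ(3) / π ^ 3`.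
-/

open Filter MeasureTheory Topology

lemma hasSum_one_div_nat_pow_riemannZeta {s : ℕ} (hs : 1 < s) :
    HasSum (fun k : ℕ ↦ 1 / (k : ℂ) ^ s) (riemannZeta s) := by
  rw [zeta_nat_eq_tsum_of_gt_one hs]
  exact (show Summable fun k : ℕ ↦ 1 / (k : ℂ) ^ s by
    simpa [← Complex.summable_ofReal] using summable_one_div_nat_pow.2 hs).hasSum

lemma hasSum_one_div_nat_add_one_pow_riemannZeta {s : ℕ} (hs : 1 < s) :
    HasSum (fun k : ℕ ↦ 1 / ((k : ℂ) + 1) ^ s) (riemannZeta s) := by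
  simpa [show s ≠ 0 by lia] using
    (hasSum_nat_add_iff' 1).2 (hasSum_one_div_nat_pow_riemannZeta hs)

lemma hasSum_neg_one_pow_div_nat_pow_s15 {s : ℕ} (hs : 1 < s) :
    HasSum (fun k : ℕ ↦ (-1) ^ k / (k : ℂ) ^ s) ((2 / 2 ^ s - 1) * riemannZeta s) := by
  have hζ := hasSum_one_div_nat_pow_riemannZeta hs
  have heven : HasSum (fun k : ℕ ↦ 1 / ((2 * k : ℕ) : ℂ) ^ s) (riemannZeta s / 2 ^ s) := by
    simpa [mul_pow, div_eq_mul_inv] using hζ.mul_right ((2 : ℂ) ^ s)⁻¹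
  have hodd : HasSum (fun k : ℕ ↦ 1 / ((2 * k + 1 : ℕ) : ℂ) ^ s)
      (riemannZeta s - riemannZeta s / 2 ^ s) := by
    have hsummable := hζ.summable.comp_injective (i := fun k : ℕ ↦ 2 * k + 1)
      fun _ _ h ↦ by simpa using h
    rw [sub_eq_of_eq_add' (hζ.unique (heven.even_add_odd hsummable.hasSum))]
    exact hsummable.hasSum
  convert! HasSum.even_add_odd (f := fun k : ℕ ↦ (-1) ^ k / (k : ℂ) ^ s)
    (by simpa using heven) (by simpa [pow_succ, neg_div] using hodd.neg) using 1
  ring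

lemma norm_natCast_add_one (k : ℕ) : ‖(k : ℂ) + 1‖ = k + 1 := by
  exact_mod_cast Complex.norm_natCast (k + 1)

lemma mem_integerComplement_of_norm_lt_one {z : ℂ} (hz₀ : z ≠ 0) (hz : ‖z‖ < 1) :
    z ∈ Complex.integerComplement := by
  rw [Complex.mem_integerComplement_iff]
  rintro ⟨n, rfl⟩
  rw [Complex.norm_intCast] at hz
  exact hz₀ (by exact_mod_cast Int.abs_lt_one_iff.1 (by exact_mod_cast hz))

lemma summable_div_nat_add_one_pow {z : ℂ} (hz : ‖z‖ < 1) :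
    Summable fun p : ℕ × ℕ ↦ (z / (p.1 + 1)) ^ (2 * (p.2 + 1)) := by
  have hsq : Summable fun k : ℕ ↦ 1 / ((k : ℝ) + 1) ^ 2 := by
    exact_mod_cast (summable_nat_add_iff 1).2 (summable_one_div_nat_pow.2 one_lt_two)
  have hgeom : Summable fun m : ℕ ↦ ‖z‖ ^ m := summable_geometric_of_lt_one (norm_nonneg z) hz
  refine .of_norm_bounded (hsq.mul_of_nonneg hgeom (fun k ↦ by positivity) fun m ↦ by positivity)
    fun ⟨k, m⟩ ↦ ?_
  have hk : (1 : ℝ) ≤ k + 1 := by simp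
  rw [norm_pow, norm_div, norm_natCast_add_one, div_pow, one_div_mul_eq_div]
  gcongr ?_ / ?_
  · exact pow_le_pow_of_le_one (norm_nonneg z) hz.le (by lia)
  · exact pow_le_pow_right₀ hk (by lia)

lemma hasSum_div_nat_add_one_pow_cotTerm {z : ℂ} (hz₀ : z ≠ 0) (hz : ‖z‖ < 1) (k : ℕ) :
    HasSum (fun m : ℕ ↦ (z / (k + 1)) ^ (2 * (m + 1))) (-(z / 2) * cotTerm z k) := by
  have hk : (k : ℂ) + 1 ≠ 0 := k.cast_add_one_ne_zero
  have hratio : ‖(z / (k + 1)) ^ 2‖ < 1 := by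
    rw [norm_pow, norm_div, norm_natCast_add_one]
    have hle : (1 : ℝ) ≤ k + 1 := by simp
    exact pow_lt_one₀ (by positivity) ((div_lt_one (by positivity)).2 (hz.trans_le hle)) two_ne_zero
  convert! (hasSum_geometric_of_norm_lt_one hratio).mul_left ((z / (k + 1)) ^ 2) using 1
  · ext m
    ring
  · have hz' := mem_integerComplement_of_norm_lt_one hz₀ hz
    have hadd : z + (k + 1) ≠ 0 := by
      exact_mod_cast Complex.integerComplement_add_ne_zero hz' (k + 1)
    have hsub : z - (k + 1) ≠ 0 := by
      simpa [sub_eq_add_neg] using Complex.integerComplement_add_ne_zero hz' (-(k + 1))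
    have hden : 1 - (z / (k + 1)) ^ 2 = -((z + (k + 1)) * (z - (k + 1))) / (k + 1) ^ 2 := by
      field_simp
      ring
    rw [cotTerm_identity hz', hden]
    field_simp

theorem hasSum_riemannZeta_two_mul_mul_pow {z : ℂ} (hz₀ : z ≠ 0) (hz : ‖z‖ < 1) :
    HasSum (fun n : ℕ ↦ riemannZeta (2 * n) * z ^ (2 * n))
      (-(π * z / 2) * Complex.cot (π * z)) := by
  obtain ⟨T, hT⟩ := summable_div_nat_add_one_pow hz
  have hcot : T = -(z / 2) * (π * Complex.cot (π * z) - 1 / z) := by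
    rw [cot_series_rep' (mem_integerComplement_of_norm_lt_one hz₀ hz), ← tsum_mul_left]
    exact (hT.prod_fiberwise (hasSum_div_nat_add_one_pow_cotTerm hz₀ hz)).tsum_eq.symm
  have hzeta (n : ℕ) : HasSum (fun k : ℕ ↦ (z / (k + 1)) ^ (2 * (n + 1)))
      (riemannZeta (2 * (n + 1 : ℕ)) * z ^ (2 * (n + 1))) := by
    simpa [div_pow, div_eq_inv_mul, mul_pow] using
      (hasSum_one_div_nat_add_one_pow_riemannZeta (s := 2 * (n + 1)) (by lia)).mul_right
        (z ^ (2 * (n + 1)))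
  have hshift := ((Equiv.prodComm ℕ ℕ).hasSum_iff.2 hT).prod_fiberwise hzeta
  have hsum := HasSum.zero_add (f := fun n : ℕ ↦ riemannZeta (2 * n) * z ^ (2 * n)) hshift
  have hvalue : riemannZeta (2 * (0 : ℕ)) * z ^ (2 * 0) + T =
      -(π * z / 2) * Complex.cot (π * z) := by
    rw [hcot, Nat.cast_zero, mul_zero, riemannZeta_zero]
    field_simp
    ring
  rwa [hvalue] at hsum

theorem tendsto_intervalIntegral_fourierChar_smul_cocompact {E : Type*} [NormedAddCommGroup E]
    [NormedSpace ℂ E] (f : ℝ → E) (a b : ℝ) :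
    Tendsto (fun t : ℝ ↦ ∫ x in a..b, fourierChar (-(x * t)) • f x) (cocompact ℝ) (𝓝 0) := by
  have hset (s : Set ℝ) (hs : MeasurableSet s) :
      Tendsto (fun t : ℝ ↦ ∫ x in s, fourierChar (-(x * t)) • f x) (cocompact ℝ) (𝓝 0) := by
    simpa only [← integral_indicator hs, Set.indicator_smul]
      using Real.tendsto_integral_exp_smul_cocompact (s.indicator f)
  simpa only [intervalIntegral, sub_zero] using
    (hset _ measurableSet_Ioc).sub (hset _ measurableSet_Ioc)

section

variable {f g : ℝ → ℝ} {a b : ℝ}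

lemma intervalIntegral_fourierChar_smul_ofReal (hf : IntervalIntegrable f volume a b) (t : ℝ) :
    ∫ x in a..b, fourierChar (-(x * t)) • (f x : ℂ) =
      (∫ x in a..b, f x * cos (2 * π * t * x) : ℝ) -
        (∫ x in a..b, f x * sin (2 * π * t * x) : ℝ) * Complex.I := by
  have hmul {u : ℝ → ℝ} (hu : Continuous u) :
      IntervalIntegrable (fun x ↦ ((f x * u x : ℝ) : ℂ)) volume a b :=
    have h := hf.mul_continuousOn hu.continuousOn
    ⟨h.1.ofReal, h.2.ofReal⟩
  rw [← intervalIntegral.integral_ofReal, ← intervalIntegral.integral_ofReal,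
    ← intervalIntegral.integral_mul_const,
    ← intervalIntegral.integral_sub (hmul (by fun_prop)) ((hmul (by fun_prop)).mul_const _)]
  refine intervalIntegral.integral_congr fun x _ ↦ ?_
  have harg : 2 * π * -(x * t) = -(2 * π * t * x) := by ring
  simp only [Circle.smul_def, fourierChar_apply, harg, Complex.exp_mul_I, smul_eq_mul,
    Complex.ofReal_neg, Complex.cos_neg, Complex.sin_neg, Complex.ofReal_mul (f x),
    Complex.ofReal_cos, Complex.ofReal_sin]
  ring

theorem tendsto_intervalIntegral_mul_cos_cocompact (hf : IntervalIntegrable f volume a b) :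
    Tendsto (fun t : ℝ ↦ ∫ x in a..b, f x * cos (2 * π * t * x)) (cocompact ℝ) (𝓝 0) := by
  have h := (Complex.continuous_re.tendsto _).comp
    (tendsto_intervalIntegral_fourierChar_smul_cocompact (fun x ↦ (f x : ℂ)) a b)
  simpa [Function.comp_def, intervalIntegral_fourierChar_smul_ofReal hf] using h

theorem tendsto_intervalIntegral_mul_sin_cocompact (hf : IntervalIntegrable f volume a b) :
    Tendsto (fun t : ℝ ↦ ∫ x in a..b, f x * sin (2 * π * t * x)) (cocompact ℝ) (𝓝 0) := by
  have h := (Complex.continuous_im.tendsto _).comp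
    (tendsto_intervalIntegral_fourierChar_smul_cocompact (fun x ↦ (f x : ℂ)) a b)
  simpa [Function.comp_def, intervalIntegral_fourierChar_smul_ofReal hf] using h.neg

lemma two_mul_sum_sin_two_mul (N : ℕ) (y : ℝ) :
    2 * ∑ k ∈ Finset.range N, sin (2 * k * y) =
      cot y - cot y * cos (2 * N * y) - sin (2 * N * y) := by
  -- Where `sin y = 0`, the junk value `cot y = cos y / 0` is `0`, as is every term of the sum.
  rcases eq_or_ne (sin y) 0 with hy | hy
  · have hzero (k : ℕ) : sin (2 * k * y) = 0 := by
      obtain ⟨n, rfl⟩ := sin_eq_zero_iff.1 hy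
      rw [← mul_assoc]
      exact_mod_cast sin_int_mul_pi (2 * k * n)
    simp [hzero, cot_eq_cos_div_sin, hy]
  · have hsum : sin y * ∑ k ∈ Finset.range N, sin (2 * k * y) = sin (N * y) * sin (N * y - y) := by
      convert! sin_mul_sum_sin N (2 * y) 0 using 3 <;> ring_nf
    rw [sin_sub] at hsum
    rw [mul_assoc 2 (N : ℝ), cos_two_mul, sin_two_mul, cot_eq_cos_div_sin]
    generalize (N : ℝ) * y = θ at hsum ⊢
    field_simp
    linear_combination 2 * hsum + 2 * cos y * sin_sq_add_cos_sq θ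

theorem tendsto_sum_intervalIntegral_mul_sin (hg : IntervalIntegrable g volume a b)
    (hcot : IntervalIntegrable (fun x ↦ g x * cot (π * x)) volume a b) :
    Tendsto (fun N ↦ ∑ k ∈ Finset.range N, ∫ x in a..b, g x * sin (2 * π * k * x)) atTop
      (𝓝 ((∫ x in a..b, g x * cot (π * x)) / 2)) := by
  have hnat : Tendsto (fun N : ℕ ↦ (N : ℝ)) atTop (cocompact ℝ) :=
    tendsto_natCast_atTop_atTop.mono_right atTop_le_cocompact
  have hlim := ((tendsto_const_nhds (x := ∫ x in a..b, g x * cot (π * x))).sub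
    ((tendsto_intervalIntegral_mul_cos_cocompact hcot).comp hnat)).sub
    ((tendsto_intervalIntegral_mul_sin_cocompact hg).comp hnat)
  rw [sub_zero, sub_zero] at hlim
  refine (hlim.div_const 2).congr fun N ↦ ?_
  simp only [Function.comp_apply]
  have hsin (k : ℕ) : IntervalIntegrable (fun x ↦ g x * sin (2 * π * k * x)) volume a b :=
    hg.mul_continuousOn (by fun_prop)
  have hcos : IntervalIntegrable (fun x ↦ g x * cot (π * x) * cos (2 * π * N * x)) volume a b :=
    hcot.mul_continuousOn (by fun_prop)
  rw [div_eq_iff two_ne_zero, ← intervalIntegral.integral_finsetSum fun k _ ↦ hsin k,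
    ← intervalIntegral.integral_mul_const, ← intervalIntegral.integral_sub hcot hcos,
    ← intervalIntegral.integral_sub (hcot.sub hcos) (hsin N)]
  refine intervalIntegral.integral_congr fun x _ ↦ ?_
  have hkernel := two_mul_sum_sin_two_mul N (π * x)
  simp only [← mul_assoc, mul_right_comm 2 _ π] at hkernel
  simp only [← Finset.mul_sum]
  linear_combination -g x * hkernel

end

lemma intervalIntegrable_id_mul_cot_pi_mul :
    IntervalIntegrable (fun x ↦ x * cot (π * x)) volume 0 (1 / 2) := by
  rw [intervalIntegrable_iff_integrableOn_Ioc_of_le (by norm_num)]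
  refine Measure.integrableOn_of_bounded (M := 1 / 2) (by simp) ?_ ?_
  · simp only [cot_eq_cos_div_sin]
    exact Measurable.aestronglyMeasurable (by fun_prop)
  · refine ae_restrict_of_forall_mem measurableSet_Ioc fun x ⟨hx₀, hx⟩ ↦ ?_
    have hsin : 2 * x ≤ sin (π * x) := by
      convert mul_le_sin (x := π * x) (by positivity) (by nlinarith [pi_pos]) using 1
      field_simp
    rw [cot_eq_cos_div_sin, norm_mul, norm_div, norm_of_nonneg hx₀.le,
      norm_of_nonneg (r := sin (π * x)) (by linarith), mul_div_assoc',
      div_le_div_iff₀ (by linarith) two_pos]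
    nlinarith [abs_cos_le_one (π * x), norm_eq_abs (cos (π * x))]

lemma integral_pow_mul_one_sub_two_mul_sq (m : ℕ) :
    ∫ x in (0 : ℝ)..(1 / 2), x ^ m * (1 - 2 * x) ^ 2 =
      1 / ((m + 1 : ℝ) * (m + 2) * (m + 3) * 2 ^ m) := by
  have hexpand (x : ℝ) : x ^ m * (1 - 2 * x) ^ 2 = x ^ m - 4 * x ^ (m + 1) + 4 * x ^ (m + 2) := by
    ring
  simp only [hexpand]
  rw [intervalIntegral.integral_add, intervalIntegral.integral_sub,
    intervalIntegral.integral_const_mul, intervalIntegral.integral_const_mul, integral_pow,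
    integral_pow, integral_pow]
  · push_cast
    simp only [one_div, pow_succ, inv_pow, mul_zero, sub_zero, mul_inv_rev]
    field_simp
    ring
  all_goals exact Continuous.intervalIntegrable (by fun_prop) _ _

-- The antiderivative comes from integrating by parts three times.
lemma hasDerivAt_cubic_mul_sin {p p' p'' : ℝ → ℝ} {c w x : ℝ} (hw : w ≠ 0)
    (hp : HasDerivAt p (p' x) x) (hp' : HasDerivAt p' (p'' x) x) (hp'' : HasDerivAt p'' c x) :
    HasDerivAt (fun x ↦ -(p x * cos (w * x) / w) + p' x * sin (w * x) / w ^ 2 +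
      p'' x * cos (w * x) / w ^ 3 - c * sin (w * x) / w ^ 4) (p x * sin (w * x)) x := by
  have hmul : HasDerivAt (fun x ↦ w * x) w x := by simpa using (hasDerivAt_id x).const_mul w
  convert! ((((hp.mul hmul.cos).div_const w).neg.add ((hp'.mul hmul.sin).div_const (w ^ 2))).add
    ((hp''.mul hmul.cos).div_const (w ^ 3))).sub ((hmul.sin.const_mul c).div_const (w ^ 4)) using 1
  field_simp
  ring

lemma integral_id_mul_one_sub_two_mul_sq_mul_sin {w : ℝ} (hw : w ≠ 0) :
    ∫ x in (0 : ℝ)..(1 / 2), x * (1 - 2 * x) ^ 2 * sin (w * x) =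
      (4 * cos (w / 2) + 8) / w ^ 3 - 24 * sin (w / 2) / w ^ 4 := by
  have hp (x : ℝ) : HasDerivAt (fun x ↦ x * (1 - 2 * x) ^ 2) ((1 - 2 * x) * (1 - 6 * x)) x := by
    convert! (hasDerivAt_id x).mul ((((hasDerivAt_id x).const_mul 2).const_sub 1).pow 2) using 1
    simp only [id_eq, Pi.pow_apply]
    push_cast
    ring
  have hp' (x : ℝ) : HasDerivAt (fun x ↦ (1 - 2 * x) * (1 - 6 * x)) (24 * x - 8) x := by
    convert! (((hasDerivAt_id x).const_mul 2).const_sub 1).mul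
      (((hasDerivAt_id x).const_mul 6).const_sub 1) using 1
    simp only [id_eq]
    ring
  have hp'' (x : ℝ) : HasDerivAt (fun x ↦ 24 * x - 8) 24 x := by
    simpa using ((hasDerivAt_id x).const_mul 24).sub_const 8
  rw [intervalIntegral.integral_eq_sub_of_hasDerivAt
    (fun x _ ↦ hasDerivAt_cubic_mul_sin hw (hp x) (hp' x) (hp'' x))
    (Continuous.intervalIntegrable (by fun_prop) _ _)]
  simp only [mul_one_div, mul_zero, cos_zero, sin_zero]
  ring

lemma integral_id_mul_one_sub_two_mul_sq_mul_sin_two_pi_mul (k : ℕ) :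
    ∫ x in (0 : ℝ)..(1 / 2), x * (1 - 2 * x) ^ 2 * sin (2 * π * k * x) =
      (4 * (-1) ^ k + 8) / (2 * π * k) ^ 3 := by
  rcases eq_or_ne k 0 with rfl | hk
  · simp
  · have hhalf : 2 * π * k / 2 = k * π := by ring
    rw [integral_id_mul_one_sub_two_mul_sq_mul_sin (by positivity), hhalf, cos_nat_mul_pi,
      sin_nat_mul_pi]
    simp

lemma integral_id_mul_one_sub_two_mul_sq_mul_cot :
    ((∫ x in (0 : ℝ)..(1 / 2), x * (1 - 2 * x) ^ 2 * cot (π * x) : ℝ) : ℂ) =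
      5 * riemannZeta 3 / (4 * π ^ 3) := by
  have hpartial := tendsto_sum_intervalIntegral_mul_sin (a := 0) (b := 1 / 2)
    (g := fun x ↦ x * (1 - 2 * x) ^ 2) (Continuous.intervalIntegrable (by fun_prop) _ _)
    ((intervalIntegrable_id_mul_cot_pi_mul.mul_continuousOn
      (g := fun x ↦ (1 - 2 * x) ^ 2) (by fun_prop)).congr fun x _ ↦ by ring)
  simp only [integral_id_mul_one_sub_two_mul_sq_mul_sin_two_pi_mul] at hpartial
  have hseries : HasSum (fun k : ℕ ↦ (((4 * (-1) ^ k + 8) / (2 * π * k) ^ 3 : ℝ) : ℂ))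
      (5 * riemannZeta 3 / (8 * π ^ 3)) := by
    convert! (((hasSum_neg_one_pow_div_nat_pow_s15 (s := 3) (by norm_num)).mul_left 4).add
      ((hasSum_one_div_nat_pow_riemannZeta (s := 3) (by norm_num)).mul_left 8)).div_const
      (8 * (π : ℂ) ^ 3) using 1
    · ext k
      push_cast
      ring
    · push_cast
      ring
  have hlim := tendsto_nhds_unique ((Complex.continuous_ofReal.tendsto _).comp hpartial)
    (by simpa [Function.comp_def] using hseries.tendsto_sum_nat)
  push_cast at hlim
  linear_combination 2 * hlim

theorem hasSum_riemannZeta_two_mul_mul_intervalIntegral {w : ℝ → ℝ} {r : ℝ} (hr₀ : 0 ≤ r)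
    (hr : r < 1) (hw : IntervalIntegrable w volume 0 r) :
    HasSum (fun n : ℕ ↦ riemannZeta (2 * n) * (∫ x in 0..r, x ^ (2 * n) * w x : ℝ))
      (-(π / 2) * (∫ x in 0..r, x * cot (π * x) * w x : ℝ)) := by
  simp only [← intervalIntegral.integral_ofReal, ← intervalIntegral.integral_const_mul]
  rcases hr₀.eq_or_lt with rfl | hr₀
  · simp [hasSum_zero]
  have hsummable : Summable fun n : ℕ ↦ ‖riemannZeta (2 * n)‖ * r ^ (2 * n) := by
    simpa [abs_of_pos hr₀] using (hasSum_riemannZeta_two_mul_mul_pow (z := r)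
      (by exact_mod_cast hr₀.ne') (by simpa [abs_of_pos hr₀] using hr)).summable.norm
  refine intervalIntegral.hasSum_integral_of_dominated_convergence
    (fun n x ↦ ‖riemannZeta (2 * n)‖ * r ^ (2 * n) * ‖w x‖) (fun n ↦ ?_) (fun n ↦ ?_) ?_ ?_ ?_
  · have hmeas : AEStronglyMeasurable w (volume.restrict (Set.uIoc 0 r)) :=
      hw.aestronglyMeasurable_restrict_uIoc
    fun_prop
  · refine .of_forall fun x hx ↦ ?_
    rw [Set.uIoc_of_le hr₀.le] at hx
    rw [norm_mul, Complex.norm_real, norm_mul, norm_pow, norm_of_nonneg hx.1.le, ← mul_assoc]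
    gcongr
    exacts [hx.1.le, hx.2]
  · exact .of_forall fun x _ ↦ hsummable.mul_right _
  · simpa only [tsum_mul_right] using hw.norm.const_mul _
  · refine .of_forall fun x hx ↦ ?_
    rw [Set.uIoc_of_le hr₀.le] at hx
    have hx₁ : ‖(x : ℂ)‖ < 1 := by simpa [abs_of_pos hx.1] using hx.2.trans_lt hr
    convert! (hasSum_riemannZeta_two_mul_mul_pow (by exact_mod_cast hx.1.ne') hx₁).mul_right
      (w x : ℂ) using 1
    · ext n
      push_cast
      ring
    · push_cast
      ring

theorem stmt15 :
    ∑' n : ℕ, riemannZeta (2 * n) / ((2 * n + 1) * (2 * n + 2) * (2 * n + 3) * 4 ^ n) =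
      -5 * riemannZeta 3 / (8 * (π : ℂ) ^ 2) := by
  have hsum := hasSum_riemannZeta_two_mul_mul_intervalIntegral (r := 1 / 2)
    (w := fun x ↦ (1 - 2 * x) ^ 2) (by norm_num) (by norm_num)
    (Continuous.intervalIntegrable (by fun_prop) _ _)
  simp only [integral_pow_mul_one_sub_two_mul_sq, mul_right_comm _ (cot _),
    integral_id_mul_one_sub_two_mul_sq_mul_cot] at hsum
  convert! hsum.tsum_eq using 1
  · congr! 2 with n
    push_cast
    rw [mul_one_div, pow_mul]
    norm_num
  · have hpi : (π : ℂ) ≠ 0 := Complex.ofReal_ne_zero.2 pi_ne_zero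
    field_simp
    ring
end
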